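/- If L₁ and L₂ are regular languages over a finite alphabet Σ with sc(Lᵢ) = nᵢ (i = 1, 2), then L₁ ∪ L₂ can be recognized by an incomplete DFA with at most n₁·n₂ + n₁ + n₂ states. Moreover, for any relatively prime integers n₁, n₂ ≥ 2 (with Σ having at least two symbols) there exist regular languages L₁, L₂ with sc(Lᵢ) = nᵢ such that sc(L₁ ∪ L₂) = n₁·n₂ + n₁ + n₂. -/

import Mathlib

/-- An incomplete DFA over alphabet `α` with state type `σ`:
the transition function is a partial function, modelled as `Option`-valued. -/
structure IDFA (α : Type) (σ : Type) where
  /-- The (partial) transition function. -/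
  step : σ → α → Option σ
  /-- The start state. -/
  start : σ
  /-- The set of accepting states. -/
  accept : Set σ

namespace IDFA

variable {α σ : Type}

/-- The extended (partial) transition function on words. -/
def evalFrom (A : IDFA α σ) (q : σ) (w : List α) : Option σ :=
  w.foldl (fun oq a => oq.bind fun p => A.step p a) (some q)

/-- Running the automaton from the start state. -/
def eval (A : IDFA α σ) (w : List α) : Option σ :=
  A.evalFrom A.start w

/-- The language recognized by an incomplete DFA: words on which the run is
defined and ends in an accepting state. -/
def accepts (A : IDFA α σ) : Set (List α) :=
  {w | ∃ q ∈ A.accept, A.eval w = some q}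

/-- `#tr(A)`: the number of (defined) transitions of `A`. -/
noncomputable def trCount (A : IDFA α σ) : ℕ :=
  {p : σ × α | (A.step p.1 p.2).isSome}.ncard

/-- `#tr(A, b)`: the number of `b`-transitions of `A`. -/
noncomputable def trCountOn (A : IDFA α σ) (b : α) : ℕ :=
  {q : σ | (A.step q b).isSome}.ncard

/-- An incomplete DFA is connected if every state is reachable from the start state. -/
def Connected (A : IDFA α σ) : Prop :=
  ∀ q : σ, ∃ w : List α, A.evalFrom A.start w = some q

end IDFA

/-- A language is regular iff it is recognized by some incomplete DFA with
finitely many states. -/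
def IsRegularLang {α : Type} (L : Set (List α)) : Prop :=
  ∃ (σ : Type) (_ : Finite σ) (A : IDFA α σ), A.accepts = L

/-- `tc(L)`: the transition complexity of `L`, i.e. the minimal number of
transitions of any incomplete DFA recognizing `L`. -/
noncomputable def tc {α : Type} (L : Set (List α)) : ℕ :=
  sInf {n | ∃ (σ : Type) (_ : Finite σ) (A : IDFA α σ), A.accepts = L ∧ A.trCount = n}

/-- `tc_b(L)`: the `b`-transition complexity of `L`, i.e. the minimal number of
`b`-transitions of any incomplete DFA recognizing `L`. -/
noncomputable def tcOn {α : Type} (L : Set (List α)) (b : α) : ℕ :=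
  sInf {n | ∃ (σ : Type) (_ : Finite σ) (A : IDFA α σ), A.accepts = L ∧ A.trCountOn b = n}

/-- `sc(L)`: the (incomplete-DFA) state complexity of `L`, i.e. the number of
states of a minimal incomplete DFA recognizing `L`. -/
noncomputable def sc {α : Type} (L : Set (List α)) : ℕ :=
  sInf {n | ∃ (σ : Type) (_ : Finite σ) (A : IDFA α σ), A.accepts = L ∧ Nat.card σ = n}

namespace IDFA

variable {α σ τ : Type}

def run (A : IDFA α σ) (x : Option σ) (w : List α) : Option σ :=
  w.foldl (fun oq a => oq.bind fun p => A.step p a) x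

def acc (A : IDFA α σ) (x : Option σ) (w : List α) : Prop :=
  ∃ q ∈ A.accept, A.run x w = some q

theorem mem_accepts (A : IDFA α σ) (w : List α) :
    w ∈ A.accepts ↔ A.acc (some A.start) w := Iff.rfl

@[simp] theorem run_nil (A : IDFA α σ) (x : Option σ) : A.run x [] = x := rfl

@[simp] theorem run_cons (A : IDFA α σ) (x : Option σ) (a : α) (w : List α) :
    A.run x (a :: w) = A.run (x.bind fun p => A.step p a) w := rfl

theorem run_append (A : IDFA α σ) (x : Option σ) (u v : List α) :
    A.run x (u ++ v) = A.run (A.run x u) v := by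
  simp [run, List.foldl_append]

@[simp] theorem run_none (A : IDFA α σ) (w : List α) : A.run none w = none := by
  induction w with
  | nil => rfl
  | cons a w ih => simpa using ih

theorem acc_append (A : IDFA α σ) (x : Option σ) (u v : List α) :
    A.acc x (u ++ v) ↔ A.acc (A.run x u) v := by
  simp [acc, run_append]

@[simp] theorem not_acc_none (A : IDFA α σ) (w : List α) : ¬ A.acc none w := by
  simp [acc]

theorem card_le_of_sep [Finite σ] [Finite τ] (A : IDFA α σ) (B : IDFA α τ)
    (hL : B.accepts = A.accepts)
    (hr : ∀ q, ∃ w, A.run (some A.start) w = some q)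
    (hs : ∀ x y : Option σ, (∀ w, A.acc x w ↔ A.acc y w) → x = y) :
    Nat.card σ ≤ Nat.card τ := by
  choose f hf using hr
  let g : Option σ → Option τ := fun x => x.bind fun q => B.run (some B.start) (f q)
  have hg : ∀ x w, B.acc (g x) w ↔ A.acc x w := by
    intro x w
    cases x with
    | none => simp [g]
    | some q =>
      have : f q ++ w ∈ B.accepts ↔ f q ++ w ∈ A.accepts := by rw [hL]
      rw [mem_accepts, mem_accepts, acc_append, acc_append, hf] at this
      simpa [g] using this
  have hinj : Function.Injective g := by
    intro x y hxy
    apply hs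
    intro w
    rw [← hg, ← hg, hxy]
  have := Nat.card_le_card_of_injective g hinj
  simpa [Finite.card_option] using this

theorem sc_le [Finite σ] (A : IDFA α σ) : sc A.accepts ≤ Nat.card σ :=
  Nat.sInf_le ⟨σ, inferInstance, A, rfl, rfl⟩

theorem sc_eq_of_sep [Finite σ] (A : IDFA α σ)
    (hr : ∀ q, ∃ w, A.run (some A.start) w = some q)
    (hs : ∀ x y : Option σ, (∀ w, A.acc x w ↔ A.acc y w) → x = y) :
    sc A.accepts = Nat.card σ := by
  apply le_antisymm A.sc_le
  refine le_csInf ⟨_, σ, inferInstance, A, rfl, rfl⟩ ?_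
  rintro n ⟨τ, _, B, hB, rfl⟩
  exact card_le_of_sep A B hB hr hs

abbrev PS (σ τ : Type) : Type := {p : Option σ × Option τ // p ≠ (none, none)}

theorem card_PS [Finite σ] [Finite τ] :
    Nat.card (PS σ τ) = Nat.card σ * Nat.card τ + Nat.card σ + Nat.card τ := by
  classical
  have := Fintype.ofFinite σ
  have := Fintype.ofFinite τ
  have : Nat.card (PS σ τ) = (Nat.card σ + 1) * (Nat.card τ + 1) - 1 := by
    simp only [Nat.card_eq_fintype_card]
    rw [Fintype.card_subtype_compl]
    simp
  rw [this]
  ring_nf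
  omega

open Classical in
noncomputable def ofPair (p : Option σ × Option τ) : Option (PS σ τ) :=
  if h : p ≠ (none, none) then some ⟨p, h⟩ else none

def toPair (x : Option (PS σ τ)) : Option σ × Option τ :=
  match x with
  | none => (none, none)
  | some p => p.1

theorem toPair_ofPair (p : Option σ × Option τ) : toPair (ofPair p) = p := by
  unfold ofPair
  split_ifs with h
  · rfl
  · push Not at h
    rw [h]; rfl

theorem toPair_inj : Function.Injective (toPair (σ := σ) (τ := τ)) := by
  intro x y h
  cases x with
  | none =>
    cases y with
    | none => rfl
    | some y => exact absurd h.symm y.2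
  | some x =>
    cases y with
    | none => exact absurd h x.2
    | some y => exact congrArg some (Subtype.ext h)

noncomputable def prod (A : IDFA α σ) (B : IDFA α τ) : IDFA α (PS σ τ) where
  step p a := ofPair (p.1.1.bind fun q => A.step q a, p.1.2.bind fun q => B.step q a)
  start := ⟨(some A.start, some B.start), by simp⟩
  accept := {p | (∃ q ∈ A.accept, p.1.1 = some q) ∨ (∃ q ∈ B.accept, p.1.2 = some q)}

theorem toPair_run (A : IDFA α σ) (B : IDFA α τ) (w : List α) (x : Option (PS σ τ)) :
    toPair ((prod A B).run x w) = (A.run (toPair x).1 w, B.run (toPair x).2 w) := by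
  induction w generalizing x with
  | nil => rfl
  | cons a w ih =>
    rw [run_cons, ih]
    cases x with
    | none => simp [toPair]
    | some p => simp [prod, toPair_ofPair]; simp [toPair]

theorem acc_prod (A : IDFA α σ) (B : IDFA α τ) (w : List α) (x : Option (PS σ τ)) :
    (prod A B).acc x w ↔ A.acc (toPair x).1 w ∨ B.acc (toPair x).2 w := by
  have h := toPair_run A B w x
  have h1 : A.run (toPair x).1 w = (toPair ((prod A B).run x w)).1 := by rw [h]
  have h2 : B.run (toPair x).2 w = (toPair ((prod A B).run x w)).2 := by rw [h]
  unfold acc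
  rw [h1, h2]
  cases (prod A B).run x w with
  | none => simp [toPair]
  | some p => simp only [Option.some.injEq, exists_eq_right', toPair]; rfl

theorem accepts_prod (A : IDFA α σ) (B : IDFA α τ) :
    (prod A B).accepts = A.accepts ∪ B.accepts := by
  ext w
  rw [Set.mem_union, mem_accepts, mem_accepts, mem_accepts, acc_prod]
  rfl

open Classical in
noncomputable def cyc (a : α) (n : ℕ) : IDFA α (ZMod n) where
  step i x := if x = a then some (i + 1) else if i = 0 then none else some i
  start := 0
  accept := {0}

theorem cyc_run (a : α) (n k : ℕ) (i : ZMod n) :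
    (cyc a n).run (some i) (List.replicate k a) = some (i + k) := by
  induction k generalizing i with
  | zero => simp
  | succ k ih =>
    rw [List.replicate_succ, run_cons]
    have : ((some i).bind fun p => (cyc a n).step p a) = some (i + 1) := by simp [cyc]
    rw [this, ih]
    push_cast
    congr 1
    ring

theorem cyc_acc (a : α) (n k : ℕ) (x : Option (ZMod n)) :
    (cyc a n).acc x (List.replicate k a) ↔ x = some (-(k : ZMod n)) := by
  cases x with
  | none => simp
  | some i =>
    simp only [acc, cyc_run, Option.some.injEq]
    simp [cyc, eq_neg_iff_add_eq_zero]

theorem cyc_run_b (a b : α) (hab : b ≠ a) (n : ℕ) (i : ZMod n) :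
    (cyc a n).run (some i) [b] = if i = 0 then none else some i := by
  simp [cyc, hab]

theorem cyc_sc (a : α) (n : ℕ) [NeZero n] : sc (cyc a n).accepts = n := by
  rw [sc_eq_of_sep]
  · simp
  · intro q
    refine ⟨List.replicate q.val a, ?_⟩
    have := cyc_run a n q.val 0
    simpa [show (cyc a n).start = 0 from rfl] using this
  · intro x y h
    have key : ∀ i : ZMod n, x = some i ↔ y = some i := by
      intro i
      have := h (List.replicate (-i).val a)
      simpa [cyc_acc] using this
    exact Option.ext key

theorem crt {m n : ℕ} [NeZero m] [NeZero n] (h : Nat.Coprime m n) (u : ZMod m) (v : ZMod n) :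
    ∃ k : ℕ, (k : ZMod m) = u ∧ (k : ZMod n) = v := by
  obtain ⟨k, h1, h2⟩ := Nat.chineseRemainder h u.val v.val
  refine ⟨k, ?_, ?_⟩
  · rw [(ZMod.natCast_eq_natCast_iff _ _ _).2 h1]; simp
  · rw [(ZMod.natCast_eq_natCast_iff _ _ _).2 h2]; simp

theorem sep_aux {m n : ℕ} [NeZero m] [NeZero n] (hn : 2 ≤ n) (h : Nat.Coprime m n)
    (x x' : Option (ZMod m)) (y y' : Option (ZMod n))
    (H : ∀ k : ℕ, (x = some (-(k : ZMod m)) ∨ y = some (-(k : ZMod n))) →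
      (x' = some (-(k : ZMod m)) ∨ y' = some (-(k : ZMod n)))) (i : ZMod m) :
    x = some i → x' = some i := by
  intro hx
  have : Fact (1 < n) := ⟨hn⟩
  obtain ⟨v, hv⟩ : ∃ v : ZMod n, y' ≠ some v := by
    by_contra hc
    push Not at hc
    have h0 := hc 0
    rw [hc 1] at h0
    exact one_ne_zero (Option.some.inj h0)
  obtain ⟨k, h1, h2⟩ := crt h (-i) (-v)
  have := H k
  rw [h1, h2, neg_neg, neg_neg] at this
  exact (this (Or.inl hx)).resolve_right hv

theorem prod_sc (a b : α) (hab : b ≠ a) (m n : ℕ) (hm : 2 ≤ m) (hn : 2 ≤ n)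
    (h : Nat.Coprime m n) :
    sc ((cyc a m).accepts ∪ (cyc a n).accepts) = m * n + m + n := by
  have : NeZero m := ⟨by omega⟩
  have : NeZero n := ⟨by omega⟩
  have : Fact (1 < m) := ⟨hm⟩
  have : Fact (1 < n) := ⟨hn⟩
  rw [← accepts_prod, sc_eq_of_sep]
  · rw [card_PS]; simp
  · rintro ⟨⟨x, y⟩, hxy⟩
    suffices hh : ∃ w, (cyc a m).run (some 0) w = x ∧ (cyc a n).run (some 0) w = y by
      obtain ⟨w, h1, h2⟩ := hh
      refine ⟨w, toPair_inj ?_⟩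
      rw [toPair_run]
      exact Prod.ext h1 h2
    cases x with
    | none =>
      cases y with
      | none => exact absurd rfl hxy
      | some j =>
        obtain ⟨k, h1, h2⟩ := crt h 0 1
        refine ⟨List.replicate k a ++ [b] ++ List.replicate (j - 1).val a, ?_, ?_⟩
        · simp only [run_append, cyc_run, cyc_run_b a b hab, h1]; simp
        · simp only [run_append, cyc_run, cyc_run_b a b hab, h2]; simp [cyc_run]
    | some i =>
      cases y with
      | none =>
        obtain ⟨k, h1, h2⟩ := crt h 1 0
        refine ⟨List.replicate k a ++ [b] ++ List.replicate (i - 1).val a, ?_, ?_⟩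
        · simp only [run_append, cyc_run, cyc_run_b a b hab, h1]; simp [cyc_run]
        · simp only [run_append, cyc_run, cyc_run_b a b hab, h2]; simp
      | some j =>
        obtain ⟨k, h1, h2⟩ := crt h i j
        refine ⟨List.replicate k a, ?_, ?_⟩
        · simp [cyc_run, h1]
        · simp [cyc_run, h2]
  · intro x y H
    have H' : ∀ k : ℕ, _ := fun k => H (List.replicate k a)
    simp only [acc_prod, cyc_acc] at H'
    apply toPair_inj
    refine Prod.ext (Option.ext fun i => ?_) (Option.ext fun j => ?_)
    · exact ⟨sep_aux hn h _ _ _ _ (fun k => (H' k).1) i,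
        sep_aux hn h _ _ _ _ (fun k => (H' k).2) i⟩
    · exact ⟨sep_aux hm h.symm _ _ _ _ (fun k hk => ((H' k).1 hk.symm).symm) j,
        sep_aux hm h.symm _ _ _ _ (fun k hk => ((H' k).2 hk.symm).symm) j⟩

end IDFA

theorem exists_min_idfa {α : Type} {L : Set (List α)} (h : IsRegularLang L) :
    ∃ (σ : Type) (_ : Finite σ) (A : IDFA α σ), A.accepts = L ∧ Nat.card σ = sc L := by
  obtain ⟨σ, hσ, A, hA⟩ := h
  exact Nat.sInf_mem (s := {n | ∃ (σ : Type) (_ : Finite σ) (A : IDFA α σ),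
    A.accepts = L ∧ Nat.card σ = n}) ⟨_, σ, hσ, A, hA, rfl⟩



/-- the state complexity of union of incomplete DFAs is at most
`n₁n₂ + n₁ + n₂`, and this bound is tight for relatively prime `n₁, n₂ ≥ 2`. -/
theorem sc_union_bound_and_tight {α : Type} [Finite α] :
    (∀ L₁ L₂ : Set (List α), IsRegularLang L₁ → IsRegularLang L₂ →
      ∃ (σ : Type) (_ : Finite σ) (A : IDFA α σ),
        A.accepts = L₁ ∪ L₂ ∧
        Nat.card σ ≤ sc L₁ * sc L₂ + sc L₁ + sc L₂) ∧
    (2 ≤ Nat.card α → ∀ n₁ n₂ : ℕ, 2 ≤ n₁ → 2 ≤ n₂ → Nat.Coprime n₁ n₂ →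
      ∃ L₁ L₂ : Set (List α), IsRegularLang L₁ ∧ IsRegularLang L₂ ∧
        sc L₁ = n₁ ∧ sc L₂ = n₂ ∧
        sc (L₁ ∪ L₂) = n₁ * n₂ + n₁ + n₂) := by
  constructor
  · intro L₁ L₂ h₁ h₂
    obtain ⟨σ, hσ, A, hA, hcA⟩ := exists_min_idfa h₁
    obtain ⟨τ, hτ, B, hB, hcB⟩ := exists_min_idfa h₂
    refine ⟨IDFA.PS σ τ, inferInstance, IDFA.prod A B, ?_, ?_⟩
    · rw [IDFA.accepts_prod, hA, hB]
    · rw [IDFA.card_PS, hcA, hcB]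
  · intro hα n₁ n₂ h₁ h₂ hco
    have : Nontrivial α := Finite.one_lt_card_iff_nontrivial.1 hα
    obtain ⟨b, a, hab⟩ := exists_pair_ne α
    have : NeZero n₁ := ⟨by omega⟩
    have : NeZero n₂ := ⟨by omega⟩
    exact ⟨(IDFA.cyc a n₁).accepts, (IDFA.cyc a n₂).accepts,
      ⟨_, inferInstance, _, rfl⟩, ⟨_, inferInstance, _, rfl⟩,
      IDFA.cyc_sc a n₁, IDFA.cyc_sc a n₂, IDFA.prod_sc a b hab n₁ n₂ h₁ h₂ hco⟩
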